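/- Set N = 1 + h and let ℂ[P/NP] be the permutation representation of W on the finite set P/NP. Then the sign character of W occurs in ℂ[P/NP] with multiplicity exactly one; that is, the subspace {v ∈ ℂ[P/NP] : w·v = sgn(w)·v for all w ∈ W} is one-dimensional, where sgn(w) = det(w). -/

import Mathlib

noncomputable section

open scoped RealInnerProductSpace BigOperators

/-- Euclidean space `ℝ^n`, the ambient space of the root system. -/
abbrev Vn (n : ℕ) := EuclideanSpace ℝ (Fin n)

/-- The coroot `α^∨ = 2α/(α,α)` of a vector `α`. -/
def coroot {n : ℕ} (α : Vn n) : Vn n := (2 / ⟪α, α⟫) • α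

/-- The reflection `s_α` applied to `β`: `β − (β, α^∨)·α`. -/
def reflVec {n : ℕ} (α β : Vn n) : Vn n := β - (2 * ⟪β, α⟫ / ⟪α, α⟫) • α

/-- An irreducible reduced crystallographic root system of rank `n` in `ℝ^n`, together
with a fixed base of simple roots `α_1,…,α_n`, the corresponding set of positive roots,
the fundamental weights `ω_1,…,ω_n` and the highest short root `θ`. -/
structure RootSystemData (n : ℕ) where
  /-- the set of roots -/
  R : Finset (Vn n)
  /-- the set of positive roots -/
  Rplus : Finset (Vn n)
  /-- the simple roots `α_1,…,α_n` -/
  sroot : Fin n → Vn n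
  /-- the fundamental weights `ω_1,…,ω_n` -/
  fw : Fin n → Vn n
  /-- the highest short root `θ` -/
  hst : Vn n
  root_ne_zero : ∀ α ∈ R, α ≠ (0 : Vn n)
  span_top : Submodule.span ℝ (R : Set (Vn n)) = ⊤
  reflect_mem : ∀ α ∈ R, ∀ β ∈ R, reflVec α β ∈ R
  crystallographic : ∀ α ∈ R, ∀ β ∈ R, ∃ z : ℤ, 2 * ⟪β, α⟫ / ⟪α, α⟫ = (z : ℝ)
  reduced : ∀ α ∈ R, ∀ c : ℝ, c • α ∈ R → c = 1 ∨ c = -1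
  irreducible : ∀ S : Set (Vn n), (∃ α ∈ R, α ∈ S) →
    (∀ α ∈ R, ∀ β ∈ R, α ∈ S → ⟪α, β⟫ ≠ 0 → β ∈ S) → ∀ β ∈ R, β ∈ S
  sroot_mem : ∀ i, sroot i ∈ Rplus
  pos_sub : Rplus ⊆ R
  pos_or : ∀ α ∈ R, α ∈ Rplus ∨ -α ∈ Rplus
  pos_not_and : ∀ α ∈ Rplus, -α ∉ Rplus
  pos_decomp : ∀ α ∈ Rplus, ∃ c : Fin n → ℕ, α = ∑ i, (c i : ℝ) • sroot i
  fw_pair : ∀ i j, ⟪fw i, coroot (sroot j)⟫ = if i = j then 1 else 0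
  theta_mem : hst ∈ Rplus
  theta_short : ∀ α ∈ R, ⟪hst, hst⟫ ≤ ⟪α, α⟫
  theta_highest : ∀ α ∈ R, ∃ c : Fin n → ℝ, (∀ i, 0 ≤ c i) ∧
    coroot hst - coroot α = ∑ i, c i • coroot (sroot i)

namespace RootSystemData

variable {n : ℕ} (D : RootSystemData n)

/-- The weight lattice `P = ⊕_i ℤ·ω_i`. -/
def P : Submodule ℤ (Vn n) := Submodule.span ℤ (Set.range D.fw)

/-- `ρ = ω_1 + ⋯ + ω_n` (the half-sum of the positive roots). -/
def rho : Vn n := ∑ i, D.fw i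

/-- The Coxeter number `h = 1 + (ρ, θ^∨)`. -/
def h : ℝ := 1 + ⟪D.rho, coroot D.hst⟫

/-- The Weyl group `W`, as the subgroup of `GL(ℝ^n)` generated by the reflections
`s_α`, `α ∈ R`. -/
def Weyl : Subgroup ((Vn n) ≃ₗ[ℝ] (Vn n)) :=
  Subgroup.closure { w | ∃ α ∈ D.R, ∀ v, w v = reflVec α v }

/-- `ω_r` is a minuscule (fundamental) weight: `(ω_r, α^∨) ≤ 1` for all `α ∈ R_+`. -/
def Minuscule (r : Fin n) : Prop := ∀ α ∈ D.Rplus, ⟪D.fw r, coroot α⟫ ≤ 1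

end RootSystemData

/-- The submodule `N·P` of the weight lattice `P`. -/
def NPsub {n : ℕ} (D : RootSystemData n) (N : ℤ) : Submodule ℤ ↥D.P :=
  LinearMap.range (N • (LinearMap.id : ↥D.P →ₗ[ℤ] ↥D.P))

/-- The finite abelian group `P/NP`. -/
abbrev Qmod {n : ℕ} (D : RootSystemData n) (N : ℤ) := ↥D.P ⧸ NPsub D N

/-- `f ∈ ℂ[P/NP]` transforms according to the sign character of `W`:
`f(w·x) = det(w)·f(x)` for every `w ∈ W` (the action of `w` on `P/NP` being induced by
any lift `wP : P → P` of `w`). -/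
def IsSignVector {n : ℕ} (D : RootSystemData n) (N : ℤ) (f : Qmod D N →₀ ℂ) : Prop :=
  ∀ w ∈ D.Weyl, ∀ wP : ↥D.P →ₗ[ℤ] ↥D.P, (∀ p : ↥D.P, ((wP p : Vn n)) = w ↑p) →
    ∀ x : ↥D.P, f (Submodule.Quotient.mk (wP x)) =
      ((LinearMap.det (w : Vn n →ₗ[ℝ] Vn n) : ℝ) : ℂ) * f (Submodule.Quotient.mk x)


/-- The pairing `(x, α^∨)`. -/
def pr {n : ℕ} (x α : Vn n) : ℝ := 2 * ⟪x, α⟫ / ⟪α, α⟫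

section basics
variable {n : ℕ}

lemma inner_coroot (x α : Vn n) : ⟪x, coroot α⟫ = pr x α := by
  unfold coroot pr
  rw [real_inner_smul_right]; ring

lemma reflVec_eq (α x : Vn n) : reflVec α x = x - pr x α • α := rfl

lemma pr_add_left (x y α : Vn n) : pr (x + y) α = pr x α + pr y α := by
  simp only [pr, inner_add_left]; ring

lemma pr_sub_left (x y α : Vn n) : pr (x - y) α = pr x α - pr y α := by
  simp only [pr, inner_sub_left]; ring

lemma pr_smul_left (c : ℝ) (x α : Vn n) : pr (c • x) α = c * pr x α := by
  simp only [pr, real_inner_smul_left]; ring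

lemma pr_neg_left (x α : Vn n) : pr (-x) α = - pr x α := by
  simp only [pr, inner_neg_left]; ring

lemma pr_zero_left (α : Vn n) : pr 0 α = 0 := by
  simp [pr]

lemma pr_neg_right (x α : Vn n) : pr x (-α) = - pr x α := by
  simp only [pr, inner_neg_left, inner_neg_right]; ring

lemma pr_sum_left {ι : Type*} (s : Finset ι) (f : ι → Vn n) (α : Vn n) :
    pr (∑ i ∈ s, f i) α = ∑ i ∈ s, pr (f i) α := by
  simp only [pr, sum_inner, Finset.mul_sum, Finset.sum_div]

lemma inner_pos_of_ne {α : Vn n} (h : α ≠ 0) : 0 < ⟪α, α⟫ := by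
  exact real_inner_self_pos.mpr h

lemma pr_self {α : Vn n} (h : α ≠ 0) : pr α α = 2 := by
  have := (inner_pos_of_ne h).ne'
  unfold pr; field_simp

lemma pr_mul {α : Vn n} (h : α ≠ 0) (x : Vn n) : pr x α * ⟪α, α⟫ = 2 * ⟪x, α⟫ := by
  have := (inner_pos_of_ne h).ne'
  unfold pr; field_simp

lemma reflVec_self {α : Vn n} (h : α ≠ 0) : reflVec α α = -α := by
  rw [reflVec_eq, pr_self h, two_smul]; abel

lemma reflVec_add (α x y : Vn n) : reflVec α (x + y) = reflVec α x + reflVec α y := by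
  simp only [reflVec_eq, pr_add_left, add_smul]; abel

lemma reflVec_neg (α x : Vn n) : reflVec α (-x) = - reflVec α x := by
  simp only [reflVec_eq, pr_neg_left, neg_smul]; abel

lemma reflVec_smul (α : Vn n) (c : ℝ) (x : Vn n) : reflVec α (c • x) = c • reflVec α x := by
  simp only [reflVec_eq, pr_smul_left, smul_sub, smul_smul]

lemma reflVec_sum {ι : Type*} (s : Finset ι) (f : ι → Vn n) (α : Vn n) :
    reflVec α (∑ i ∈ s, f i) = ∑ i ∈ s, reflVec α (f i) := by
  simp only [reflVec_eq, pr_sum_left, Finset.sum_sub_distrib, Finset.sum_smul]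

lemma reflVec_reflVec {α : Vn n} (h : α ≠ 0) (x : Vn n) : reflVec α (reflVec α x) = x := by
  simp only [reflVec_eq, pr_sub_left, pr_smul_left, pr_self h, sub_smul, mul_smul, two_smul]
  simp only [smul_add]
  abel

lemma inner_reflVec_left (α x y : Vn n) : ⟪reflVec α x, y⟫ = ⟪x, reflVec α y⟫ := by
  simp only [reflVec_eq, inner_sub_left, inner_sub_right, real_inner_smul_left,
    real_inner_smul_right, pr]
  rw [real_inner_comm y α]; ring

lemma inner_reflVec {α : Vn n} (h : α ≠ 0) (x y : Vn n) :
    ⟪reflVec α x, reflVec α y⟫ = ⟪x, y⟫ := by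
  rw [inner_reflVec_left, reflVec_reflVec h]

lemma pr_reflVec {α : Vn n} (h : α ≠ 0) (x y : Vn n) :
    pr (reflVec α x) (reflVec α y) = pr x y := by
  simp only [pr, inner_reflVec h]

lemma pr_reflVec_left {α : Vn n} (h : α ≠ 0) (x y : Vn n) :
    pr (reflVec α x) y = pr x (reflVec α y) := by
  rw [← pr_reflVec h x (reflVec α y), reflVec_reflVec h]

/-- the reflection as a linear equivalence -/
def reflEquiv (α : Vn n) : Vn n ≃ₗ[ℝ] Vn n := ((ℝ ∙ α)ᗮ.reflection).toLinearEquiv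

lemma reflEquiv_apply (α v : Vn n) : reflEquiv α v = reflVec α v := by
  change (ℝ ∙ α)ᗮ.reflection v = _
  rw [Submodule.reflection_orthogonal_apply, Submodule.reflection_singleton_apply, reflVec,
    real_inner_self_eq_norm_sq, real_inner_comm v α, neg_sub, ← Nat.cast_smul_eq_nsmul ℝ, smul_smul]
  congr 2
  simp; ring

lemma reflEquiv_det {α : Vn n} (h : α ≠ 0) :
    LinearMap.det (reflEquiv α : Vn n →ₗ[ℝ] Vn n) = -1 := by
  have := Submodule.det_reflection (𝕜 := ℝ) (ℝ ∙ α)ᗮ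
  rw [Submodule.orthogonal_orthogonal, finrank_span_singleton h, pow_one] at this
  exact this

end basics

namespace RootSystemData
variable {n : ℕ} (D : RootSystemData n)

lemma pos_ne {α : Vn n} (h : α ∈ D.Rplus) : α ≠ 0 := D.root_ne_zero _ (D.pos_sub h)
lemma sroot_R (i : Fin n) : D.sroot i ∈ D.R := D.pos_sub (D.sroot_mem i)
lemma sroot_ne (i : Fin n) : D.sroot i ≠ 0 := D.pos_ne (D.sroot_mem i)

lemma neg_mem {α : Vn n} (h : α ∈ D.R) : -α ∈ D.R := by
  have := D.reflect_mem α h α h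
  rwa [reflVec_self (D.root_ne_zero _ h)] at this

lemma refl_mem {α β : Vn n} (h : α ∈ D.R) (h' : β ∈ D.R) : reflVec α β ∈ D.R :=
  D.reflect_mem α h β h'

lemma pr_int {α β : Vn n} (h : α ∈ D.R) (h' : β ∈ D.R) : ∃ z : ℤ, pr β α = z :=
  D.crystallographic α h β h'

lemma pr_fw (i j : Fin n) : pr (D.fw i) (D.sroot j) = if i = j then 1 else 0 := by
  rw [← inner_coroot, D.fw_pair]

lemma pr_rho (j : Fin n) : pr D.rho (D.sroot j) = 1 := by
  simp [rho, pr_sum_left, pr_fw]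

lemma inner_fw (i j : Fin n) :
    ⟪D.fw i, D.sroot j⟫ = if i = j then ⟪D.sroot j, D.sroot j⟫ / 2 else 0 := by
  have := pr_mul (D.sroot_ne j) (D.fw i)
  rw [pr_fw] at this
  split_ifs at * <;> linarith

lemma inner_rho (j : Fin n) : ⟪D.rho, D.sroot j⟫ = ⟪D.sroot j, D.sroot j⟫ / 2 := by
  have := pr_mul (D.sroot_ne j) D.rho
  rw [pr_rho] at this
  linarith

lemma sroot_pos (j : Fin n) : 0 < ⟪D.sroot j, D.sroot j⟫ := inner_pos_of_ne (D.sroot_ne j)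

lemma inner_fw_pos {α : Vn n} (h : α ∈ D.Rplus) (j : Fin n) : 0 ≤ ⟪D.fw j, α⟫ := by
  obtain ⟨c, rfl⟩ := D.pos_decomp α h
  rw [inner_sum]
  refine Finset.sum_nonneg fun i _ => ?_
  rw [real_inner_smul_right, inner_fw]
  have := (D.sroot_pos i).le
  split_ifs <;> positivity

/-- pairing with a dominant vector is nonnegative -/
lemma inner_dom {x : Vn n} (hx : ∀ i, 0 ≤ pr x (D.sroot i)) {α : Vn n} (h : α ∈ D.Rplus) :
    0 ≤ ⟪x, α⟫ := by
  obtain ⟨c, rfl⟩ := D.pos_decomp α h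
  rw [inner_sum]
  refine Finset.sum_nonneg fun i _ => ?_
  rw [real_inner_smul_right]
  have := (D.sroot_pos i).le
  have h2 := pr_mul (D.sroot_ne i) x
  have := mul_nonneg (hx i) this
  have : 0 ≤ ⟪x, D.sroot i⟫ := by linarith
  positivity

lemma inner_rho_pos {α : Vn n} (h : α ∈ D.Rplus) : 0 < ⟪D.rho, α⟫ := by
  have hne := D.pos_ne h
  obtain ⟨c, rfl⟩ := D.pos_decomp α h
  rw [inner_sum]
  have h0 : ∀ i ∈ Finset.univ, 0 ≤ ⟪D.rho, (c i : ℝ) • D.sroot i⟫ := by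
    intro i _
    rw [real_inner_smul_right, inner_rho]
    have := (D.sroot_pos i).le
    positivity
  refine lt_of_le_of_ne (Finset.sum_nonneg h0) fun h1 => hne ?_
  have h2 := (Finset.sum_eq_zero_iff_of_nonneg h0).1 h1.symm
  refine Finset.sum_eq_zero fun i hi => ?_
  have h3 := h2 i hi
  rw [real_inner_smul_right, inner_rho] at h3
  have := D.sroot_pos i
  rcases mul_eq_zero.1 h3 with h4 | h4
  · rw [h4, zero_smul]
  · linarith

lemma pr_rho_pos {α : Vn n} (h : α ∈ D.Rplus) : 0 < pr D.rho α := by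
  have := D.inner_rho_pos h
  have := inner_pos_of_ne (D.pos_ne h)
  unfold pr; positivity

lemma exists_other {α : Vn n} (h : α ∈ D.Rplus) (i : Fin n) (hi : α ≠ D.sroot i) :
    ∃ j, j ≠ i ∧ 0 < ⟪D.fw j, α⟫ := by
  by_contra! hcon
  obtain ⟨c, hc⟩ := D.pos_decomp α h
  have hj : ∀ j, j ≠ i → c j = 0 := by
    intro j hji
    have := hcon j hji
    have h1 : ⟪D.fw j, α⟫ = c j * (⟪D.sroot j, D.sroot j⟫ / 2) := by
      rw [hc, inner_sum, Finset.sum_eq_single j]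
      · rw [real_inner_smul_right, inner_fw, if_pos rfl]
      · intro k _ hk
        rw [real_inner_smul_right, inner_fw, if_neg (Ne.symm hk), mul_zero]
      · simp
    rw [h1] at this
    have h2 := D.sroot_pos j
    by_contra h3
    have h4 : (0:ℝ) < c j := by positivity
    have : 0 < (c j : ℝ) * (⟪D.sroot j, D.sroot j⟫ / 2) := by positivity
    linarith
  have h2 : α = (c i : ℝ) • D.sroot i := by
    rw [hc, Finset.sum_eq_single i]
    · intro k _ hk
      rw [hj k hk]; simp
    · simp
  have h3 := D.reduced _ (D.sroot_R i) (c i) (h2 ▸ D.pos_sub h)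
  rcases h3 with h3 | h3
  · rw [h3, one_smul] at h2; exact hi h2
  · have : (0:ℝ) ≤ c i := by positivity
    linarith

lemma simple_refl_pos {α : Vn n} (h : α ∈ D.Rplus) (i : Fin n) (hi : α ≠ D.sroot i) :
    reflVec (D.sroot i) α ∈ D.Rplus := by
  rcases D.pos_or _ (D.refl_mem (D.sroot_R i) (D.pos_sub h)) with h1 | h1
  · exact h1
  · exfalso
    obtain ⟨j, hj, hj2⟩ := D.exists_other h i hi
    have h2 := D.inner_fw_pos h1 j
    rw [reflVec_eq, inner_neg_right, inner_sub_right, real_inner_smul_right, inner_fw, if_neg hj]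
      at h2
    linarith

/-- orthogonal to all simple roots implies zero -/
lemma eq_zero_of_pr {x : Vn n} (h : ∀ i, pr x (D.sroot i) = 0) : x = 0 := by
  have h1 : ∀ i, ⟪x, D.sroot i⟫ = 0 := by
    intro i
    have := pr_mul (D.sroot_ne i) x
    rw [h] at this; linarith
  have h2 : ∀ α ∈ D.Rplus, ⟪x, α⟫ = 0 := by
    intro α hα
    obtain ⟨c, rfl⟩ := D.pos_decomp α hα
    rw [inner_sum]
    refine Finset.sum_eq_zero fun i _ => ?_
    rw [real_inner_smul_right, h1, mul_zero]
  have h3 : ∀ y ∈ Submodule.span ℝ (D.R : Set (Vn n)), ⟪x, y⟫ = 0 := by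
    intro y hy
    induction hy using Submodule.span_induction with
    | mem y hy =>
      rcases D.pos_or y hy with hp | hp
      · exact h2 _ hp
      · have := h2 _ hp
        rw [inner_neg_right] at this; linarith
    | zero => simp
    | add y z _ _ hy hz => rw [inner_add_right, hy, hz, add_zero]
    | smul a y _ hy => rw [real_inner_smul_right, hy, mul_zero]
  exact inner_self_eq_zero.1 (h3 x (by rw [D.span_top]; trivial))

lemma fw_mem (i : Fin n) : D.fw i ∈ D.P := Submodule.subset_span ⟨i, rfl⟩

lemma rho_mem : D.rho ∈ D.P := Submodule.sum_mem _ fun i _ => D.fw_mem i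

lemma int_smul_mem (S : Submodule ℤ (Vn n)) {x : Vn n} (hx : x ∈ S) (z : ℤ) : (z : ℝ) • x ∈ S := by
  rw [Int.cast_smul_eq_zsmul]; exact S.smul_mem _ hx

lemma root_mem_P {β : Vn n} (h : β ∈ D.R) : β ∈ D.P := by
  have h1 : β = ∑ i, pr β (D.sroot i) • D.fw i := by
    rw [← sub_eq_zero]
    apply D.eq_zero_of_pr
    intro j
    simp [pr_sub_left, pr_sum_left, pr_smul_left, pr_fw]
  rw [h1]
  refine Submodule.sum_mem _ fun i _ => ?_
  obtain ⟨z, hz⟩ := D.pr_int (D.sroot_R i) h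
  rw [hz]
  exact int_smul_mem _ (D.fw_mem i) z

/-- coroots are integral combinations of simple coroots -/
lemma pr_fw_int_pos (j : Fin n) : ∀ α ∈ D.Rplus, ∃ z : ℤ, pr (D.fw j) α = z := by
  classical
  by_contra! hcon
  obtain ⟨α₀, h₀, h₀'⟩ := hcon
  let S := D.Rplus.filter fun α => ∀ z : ℤ, pr (D.fw j) α ≠ z
  obtain ⟨α, hα, hmin⟩ := Finset.exists_min_image S (fun α => ⟪D.rho, α⟫)
    ⟨α₀, Finset.mem_filter.2 ⟨h₀, h₀'⟩⟩
  obtain ⟨hα1, hα2⟩ := Finset.mem_filter.1 hα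
  have h1 : ∃ i, 0 < ⟪α, D.sroot i⟫ := by
    by_contra! h2
    obtain ⟨c, hc⟩ := D.pos_decomp α hα1
    have h3 : ⟪α, α⟫ ≤ 0 := by
      have h5 : ⟪α, α⟫ = ⟪∑ i, (c i : ℝ) • D.sroot i, α⟫ := by rw [← hc]
      rw [h5, sum_inner]
      refine Finset.sum_nonpos fun i _ => ?_
      rw [real_inner_smul_left, real_inner_comm]
      exact mul_nonpos_of_nonneg_of_nonpos (by positivity) (h2 i)
    have := inner_pos_of_ne (D.pos_ne hα1)
    linarith
  obtain ⟨i, hi⟩ := h1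
  have hne : α ≠ D.sroot i := by
    rintro rfl
    apply hα2 (if j = i then 1 else 0)
    rw [pr_fw]; simp
  have h2 := D.simple_refl_pos hα1 i hne
  have hlt : ⟪D.rho, reflVec (D.sroot i) α⟫ < ⟪D.rho, α⟫ := by
    rw [reflVec_eq, inner_sub_right, real_inner_smul_right, inner_rho]
    have := D.sroot_pos i
    have : 0 < pr α (D.sroot i) := by unfold pr; positivity
    have : 0 < pr α (D.sroot i) * (⟪D.sroot i, D.sroot i⟫ / 2) := by positivity
    linarith
  have h3 : ∃ z : ℤ, pr (D.fw j) (reflVec (D.sroot i) α) = z := by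
    by_contra! h4
    have := hmin _ (Finset.mem_filter.2 ⟨h2, h4⟩)
    linarith
  obtain ⟨z, hz⟩ := h3
  rw [← pr_reflVec_left (D.sroot_ne i), reflVec_eq, pr_sub_left, pr_smul_left, pr_fw] at hz
  obtain ⟨w, hw⟩ := D.pr_int (D.pos_sub hα1) (D.sroot_R i)
  apply hα2 (z + (if j = i then 1 else 0) * w)
  rw [hw] at hz
  push_cast
  linarith

lemma pr_P_int {x : Vn n} (hx : x ∈ D.P) {α : Vn n} (h : α ∈ D.R) : ∃ z : ℤ, pr x α = z := by
  induction hx using Submodule.span_induction with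
  | mem y hy =>
    obtain ⟨j, rfl⟩ := hy
    rcases D.pos_or _ h with h1 | h1
    · exact D.pr_fw_int_pos j _ h1
    · obtain ⟨z, hz⟩ := D.pr_fw_int_pos j _ h1
      rw [pr_neg_right] at hz
      exact ⟨-z, by push_cast; linarith⟩
  | zero => exact ⟨0, by simp [pr]⟩
  | add y z _ _ hy hz =>
    obtain ⟨a, ha⟩ := hy
    obtain ⟨b, hb⟩ := hz
    exact ⟨a + b, by rw [pr_add_left, ha, hb]; push_cast; rfl⟩
  | smul a y _ hy =>
    obtain ⟨b, hb⟩ := hy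
    exact ⟨a * b, by rw [← Int.cast_smul_eq_zsmul ℝ, pr_smul_left, hb]; push_cast; rfl⟩

/-- The root lattice. -/
def Q : Submodule ℤ (Vn n) := Submodule.span ℤ (D.R : Set (Vn n))

lemma root_mem_Q {β : Vn n} (h : β ∈ D.R) : β ∈ D.Q := Submodule.subset_span h

lemma Q_le_P : D.Q ≤ D.P := Submodule.span_le.2 fun _ h => D.root_mem_P h

lemma refl_sub_mem_Q {x : Vn n} (hx : x ∈ D.P) {α : Vn n} (h : α ∈ D.R) :
    reflVec α x - x ∈ D.Q := by
  obtain ⟨z, hz⟩ := D.pr_P_int hx h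
  rw [reflVec_eq, sub_sub_cancel_left, hz]
  exact Submodule.neg_mem _ (int_smul_mem _ (D.root_mem_Q h) z)

lemma refl_mem_P {x : Vn n} (hx : x ∈ D.P) {α : Vn n} (h : α ∈ D.R) :
    reflVec α x ∈ D.P := by
  have := add_mem (D.Q_le_P (D.refl_sub_mem_Q hx h)) hx
  rwa [sub_add_cancel] at this

open Classical in
/-- The positive one of `± s_β α`. -/
def tau (β α : Vn n) : Vn n := if reflVec β α ∈ D.Rplus then reflVec β α else - reflVec β α

lemma tau_mem {β α : Vn n} (hβ : β ∈ D.R) (hα : α ∈ D.Rplus) : D.tau β α ∈ D.Rplus := by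
  unfold tau
  split_ifs with h
  · exact h
  · exact (D.pos_or _ (D.refl_mem hβ (D.pos_sub hα))).resolve_left h

lemma tau_tau {β α : Vn n} (hβ : β ∈ D.R) (hα : α ∈ D.Rplus) : D.tau β (D.tau β α) = α := by
  have h0 := D.root_ne_zero _ hβ
  by_cases h : reflVec β α ∈ D.Rplus
  · have h1 : D.tau β α = reflVec β α := by simp [tau, h]
    rw [h1]
    simp [tau, reflVec_reflVec h0, hα]
  · have h1 : D.tau β α = - reflVec β α := by simp [tau, h]
    rw [h1]
    simp [tau, reflVec_neg, reflVec_reflVec h0, D.pos_not_and α hα]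

lemma tau_cases (β α : Vn n) : D.tau β α = reflVec β α ∨ D.tau β α = -reflVec β α := by
  unfold tau; split_ifs <;> simp

lemma sum_tau {M : Type*} [AddCommMonoid M] {β : Vn n} (hβ : β ∈ D.R) (t : Vn n → M) :
    ∑ α ∈ D.Rplus, t (D.tau β α) = ∑ α ∈ D.Rplus, t α :=
  Finset.sum_nbij' (D.tau β) (D.tau β) (fun _ h => D.tau_mem hβ h) (fun _ h => D.tau_mem hβ h)
    (fun _ h => D.tau_tau hβ h) (fun _ h => D.tau_tau hβ h) (fun _ _ => rfl)

lemma prod_tau {M : Type*} [CommMonoid M] {β : Vn n} (hβ : β ∈ D.R) (t : Vn n → M) :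
    ∏ α ∈ D.Rplus, t (D.tau β α) = ∏ α ∈ D.Rplus, t α :=
  Finset.prod_nbij' (D.tau β) (D.tau β) (fun _ h => D.tau_mem hβ h) (fun _ h => D.tau_mem hβ h)
    (fun _ h => D.tau_tau hβ h) (fun _ h => D.tau_tau hβ h) (fun _ _ => rfl)

end RootSystemData

namespace RootSystemData
variable {n : ℕ} (D : RootSystemData n)

lemma two_rho : ∑ α ∈ D.Rplus, α = (2 : ℝ) • D.rho := by
  classical
  rw [← sub_eq_zero]
  apply D.eq_zero_of_pr
  intro i
  rw [pr_sub_left, pr_smul_left, pr_rho, pr_sum_left]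
  have h0 := D.sroot_ne i
  have h1 : ∑ α ∈ D.Rplus.erase (D.sroot i), pr α (D.sroot i) = 0 := by
    have h2 : ∑ α ∈ D.Rplus.erase (D.sroot i), pr α (D.sroot i)
        = ∑ α ∈ D.Rplus.erase (D.sroot i), - pr α (D.sroot i) := by
      have hm : ∀ α ∈ D.Rplus.erase (D.sroot i),
          reflVec (D.sroot i) α ∈ D.Rplus.erase (D.sroot i) := by
        intro α hα
        rw [Finset.mem_erase] at hα ⊢
        refine ⟨fun h => ?_, D.simple_refl_pos hα.2 i hα.1⟩
        have h3 : α = - D.sroot i := by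
          rw [← reflVec_self h0, ← reflVec_reflVec h0 α, h]
        exact D.pos_not_and _ (D.sroot_mem i) (h3 ▸ hα.2)
      refine Finset.sum_nbij' (reflVec (D.sroot i)) (reflVec (D.sroot i)) hm hm
        (fun _ _ => reflVec_reflVec h0 _) (fun _ _ => reflVec_reflVec h0 _) ?_
      intro α _
      rw [pr_reflVec_left h0, reflVec_self h0, pr_neg_right, neg_neg]
    rw [Finset.sum_neg_distrib] at h2
    linarith
  rw [← Finset.add_sum_erase _ _ (D.sroot_mem i), h1, pr_self h0]
  norm_num

lemma h_eq : D.h = 1 + pr D.rho D.hst := by rw [h, inner_coroot]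

/-- The highest coroot dominates on dominant vectors. -/
lemma pr_le_theta {x : Vn n} (hx : ∀ i, 0 ≤ pr x (D.sroot i)) {α : Vn n} (hα : α ∈ D.R) :
    pr x α ≤ pr x D.hst := by
  obtain ⟨c, hc, he⟩ := D.theta_highest α hα
  have h1 : ⟪x, coroot D.hst - coroot α⟫ = ∑ i, c i * pr x (D.sroot i) := by
    rw [he, inner_sum]
    refine Finset.sum_congr rfl fun i _ => ?_
    rw [real_inner_smul_right, inner_coroot]
  rw [inner_sub_right, inner_coroot, inner_coroot] at h1
  have : 0 ≤ ∑ i, c i * pr x (D.sroot i) :=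
    Finset.sum_nonneg fun i _ => mul_nonneg (hc i) (hx i)
  linarith

lemma rho_dom (i : Fin n) : 0 ≤ pr D.rho (D.sroot i) := by rw [pr_rho]; norm_num

lemma theta_R : D.hst ∈ D.R := D.pos_sub D.theta_mem
lemma theta_ne : D.hst ≠ 0 := D.pos_ne D.theta_mem

lemma theta_dom {α : Vn n} (hα : α ∈ D.Rplus) : 0 ≤ ⟪D.hst, α⟫ := by
  have h0 := D.pos_ne hα
  have h1 := D.pr_le_theta D.rho_dom (D.refl_mem (D.pos_sub hα) D.theta_R)
  rw [← pr_reflVec_left h0, reflVec_eq, pr_sub_left, pr_smul_left] at h1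
  have h2 := D.pr_rho_pos hα
  have h3 : 0 ≤ pr D.rho α * pr α D.hst := by linarith
  have h4 : 0 ≤ pr α D.hst := nonneg_of_mul_nonneg_right h3 h2
  have h5 := pr_mul D.theta_ne α
  have h6 := inner_pos_of_ne D.theta_ne
  have h7 := mul_nonneg h4 h6.le
  rw [real_inner_comm]; linarith

lemma theta_pr {α : Vn n} (hα : α ∈ D.Rplus) (hne : α ≠ D.hst) :
    pr D.hst α * pr α D.hst = pr α D.hst := by
  have h0 := inner_pos_of_ne (D.pos_ne hα)
  obtain ⟨z, hz⟩ := D.pr_int (D.pos_sub hα) D.theta_R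
  have hm := pr_mul (D.pos_ne hα) D.hst
  have hd := D.theta_dom hα
  have hz0 : 0 ≤ z := by
    have : 0 ≤ pr D.hst α := by unfold pr; positivity
    rw [hz] at this; exact_mod_cast this
  have hz1 : z ≤ 1 := by
    by_contra! h2
    have h3 : (2 : ℝ) ≤ z := by exact_mod_cast h2
    rw [hz] at hm
    have h4 : ⟪D.hst - α, D.hst - α⟫ ≤ 0 := by
      rw [inner_sub_left, inner_sub_right, inner_sub_right, real_inner_comm D.hst α]
      have := D.theta_short α (D.pos_sub hα)
      nlinarith
    have h5 : D.hst - α = 0 := by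
      by_contra h6
      have := inner_pos_of_ne h6
      linarith
    exact hne (sub_eq_zero.1 h5).symm
  have h01 : z = 0 ∨ z = 1 := by omega
  rcases h01 with rfl | rfl
  · rw [hz] at hm
    have : ⟪D.hst, α⟫ = 0 := by simp at hm; linarith
    have h5 : pr α D.hst = 0 := by unfold pr; rw [real_inner_comm, this]; simp
    rw [h5, mul_zero]
  · rw [hz]; simp

/-- The operator `Σ_{α>0} (x,α^∨) α`. -/
def T (x : Vn n) : Vn n := ∑ α ∈ D.Rplus, pr x α • α

lemma T_symm (x y : Vn n) : ⟪D.T x, y⟫ = ⟪x, D.T y⟫ := by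
  unfold T
  rw [sum_inner, inner_sum]
  refine Finset.sum_congr rfl fun α _ => ?_
  rw [real_inner_smul_left, real_inner_smul_right, pr, pr, real_inner_comm y α]
  ring

lemma T_refl {β : Vn n} (hβ : β ∈ D.R) (x : Vn n) : reflVec β (D.T (reflVec β x)) = D.T x := by
  unfold T
  rw [reflVec_sum]
  refine Eq.trans ?_ (D.sum_tau hβ (fun α => pr x α • α))
  refine Finset.sum_congr rfl fun α _ => ?_
  rw [reflVec_smul, pr_reflVec_left (D.root_ne_zero _ hβ)]
  rcases D.tau_cases β α with h | h
  · rw [h]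
  · rw [h, pr_neg_right, smul_neg, neg_smul, neg_neg]

lemma T_neg (x : Vn n) : D.T (-x) = - D.T x := by
  simp [T, pr_neg_left]

lemma T_root {β : Vn n} (hβ : β ∈ D.R) : D.T β = (pr (D.T β) β / 2) • β := by
  have h1 := D.T_refl hβ β
  rw [reflVec_self (D.root_ne_zero _ hβ), T_neg, reflVec_neg, reflVec_eq, neg_sub] at h1
  have h2 : pr (D.T β) β • β = (2 : ℝ) • D.T β := by
    rw [two_smul]
    nth_rewrite 2 [← h1]
    abel
  rw [div_eq_inv_mul, mul_smul, h2, smul_smul]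
  norm_num

lemma T_theta_pr : pr (D.T D.hst) D.hst = 2 * D.h := by
  classical
  unfold T
  rw [pr_sum_left, ← Finset.add_sum_erase _ _ D.theta_mem]
  have h1 : ∑ α ∈ D.Rplus.erase D.hst, pr (pr D.hst α • α) D.hst
      = ∑ α ∈ D.Rplus.erase D.hst, pr α D.hst := by
    refine Finset.sum_congr rfl fun α hα => ?_
    rw [pr_smul_left, D.theta_pr (Finset.mem_of_mem_erase hα) (Finset.ne_of_mem_erase hα)]
  have h2 : pr (∑ α ∈ D.Rplus, α) D.hst = 2 + ∑ α ∈ D.Rplus.erase D.hst, pr α D.hst := by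
    rw [pr_sum_left, ← Finset.add_sum_erase _ _ D.theta_mem, pr_self D.theta_ne]
  rw [two_rho, pr_smul_left] at h2
  rw [h1, h_eq, pr_smul_left, pr_self D.theta_ne]
  linarith

lemma T_root_eq {β : Vn n} (hβ : β ∈ D.R) : D.T β = D.h • β := by
  refine D.irreducible {α | D.T α = D.h • α} ⟨D.hst, D.theta_R, ?_⟩ ?_ β hβ
  · have := D.T_root D.theta_R
    rw [T_theta_pr] at this
    rw [Set.mem_ofPred_eq, this]; congr 1; ring
  · intro α hα γ hγ hS hne
    rw [Set.mem_ofPred_eq] at hS ⊢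
    have h1 := D.T_root hγ
    have h2 := D.T_symm α γ
    rw [hS, h1, real_inner_smul_left, real_inner_smul_right] at h2
    rw [h1, ← mul_right_cancel₀ hne h2]

lemma T_eq (x : Vn n) : D.T x = D.h • x := by
  have hx : x ∈ Submodule.span ℝ (D.R : Set (Vn n)) := by rw [D.span_top]; trivial
  induction hx using Submodule.span_induction with
  | mem y hy => exact D.T_root_eq hy
  | zero => simp [T, pr_zero_left]
  | add y z _ _ hy hz =>
    rw [smul_add, ← hy, ← hz]; simp [T, pr_add_left, add_smul, Finset.sum_add_distrib]
  | smul a y _ hy =>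
    rw [smul_comm, ← hy]; simp [T, pr_smul_left, Finset.smul_sum, smul_smul]

/-- `h P ⊆ Q`. -/
lemma h_smul_mem {x : Vn n} (hx : x ∈ D.P) : D.h • x ∈ D.Q := by
  rw [← T_eq]
  refine Submodule.sum_mem _ fun α hα => ?_
  obtain ⟨z, hz⟩ := D.pr_P_int hx (D.pos_sub hα)
  rw [hz]
  exact int_smul_mem _ (D.root_mem_Q (D.pos_sub hα)) z

lemma add_root {γ β : Vn n} (hγ : γ ∈ D.R) (hβ : β ∈ D.R) (hneg : ⟪γ, β⟫ < 0)
    (hne : γ + β ≠ 0) : γ + β ∈ D.R := by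
  obtain ⟨a, ha⟩ := D.pr_int hβ hγ
  obtain ⟨b, hb⟩ := D.pr_int hγ hβ
  have hβ0 := D.root_ne_zero _ hβ
  have hγ0 := D.root_ne_zero _ hγ
  have ha1 := pr_mul hβ0 γ
  have hb1 := pr_mul hγ0 β
  have pβ := inner_pos_of_ne hβ0
  have pγ := inner_pos_of_ne hγ0
  rw [ha] at ha1
  rw [hb, real_inner_comm γ β] at hb1
  have ha2 : a < 0 := by
    by_contra! h
    have : (0:ℝ) ≤ a := by exact_mod_cast h
    nlinarith
  have hb2 : b < 0 := by
    by_contra! h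
    have : (0:ℝ) ≤ b := by exact_mod_cast h
    nlinarith
  by_cases h1 : a = -1
  · have := D.refl_mem hβ hγ
    rw [reflVec_eq, ha, h1] at this
    simpa using this
  by_cases h2 : b = -1
  · have := D.refl_mem hγ hβ
    rw [reflVec_eq, hb, h2] at this
    rw [add_comm]
    simpa using this
  exfalso
  have h3 : (a : ℝ) ≤ -2 := by
    have : a ≤ -2 := by omega
    exact_mod_cast this
  have h4 : (b : ℝ) ≤ -2 := by
    have : b ≤ -2 := by omega
    exact_mod_cast this
  have h5 := inner_pos_of_ne hne
  rw [inner_add_left, inner_add_right, inner_add_right, real_inner_comm γ β] at h5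
  nlinarith

lemma inner_multiset_sum (s : Multiset (Vn n)) (y : Vn n) :
    ⟪s.sum, y⟫ = (s.map fun x => ⟪x, y⟫).sum := by
  induction s using Multiset.induction_on with
  | empty => simp
  | cons a s ih => simp [inner_add_left, ih]

lemma exists_pos_of_sum {s : Multiset (Vn n)} (F : Vn n → ℝ) (h : 0 < (s.map F).sum) :
    ∃ x ∈ s, 0 < F x := by
  by_contra! hcon
  have : (s.map F).sum ≤ 0 := by
    clear h
    induction s using Multiset.induction_on with
    | empty => simp
    | cons a s ih =>
      rw [Multiset.map_cons, Multiset.sum_cons]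
      have h1 := hcon a (Multiset.mem_cons_self a s)
      have h2 := ih fun x hx => hcon x (Multiset.mem_cons_of_mem hx)
      linarith
  linarith

lemma sum_roots_zero : ∀ k : ℕ, ∀ s : Multiset (Vn n), s.card = k → (∀ β ∈ s, β ∈ D.R) →
    (∀ β ∈ D.R, pr s.sum β ≤ 1) → s.sum = 0 := by
  intro k
  induction k using Nat.strong_induction_on with
  | _ k ih =>
    intro s hk hs hpr
    by_contra hne
    have h1 := inner_pos_of_ne hne
    rw [inner_multiset_sum] at h1
    obtain ⟨β, hβs, hβ⟩ := exists_pos_of_sum _ h1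
    obtain ⟨t, rfl⟩ := Multiset.exists_cons_of_mem hβs
    have hβR := hs β hβs
    have hβ0 := D.root_ne_zero _ hβR
    have h2 := hpr β hβR
    rw [Multiset.sum_cons, pr_add_left, pr_self hβ0] at h2
    have h3 := pr_mul hβ0 t.sum
    have pβ := inner_pos_of_ne hβ0
    have h4 : ⟪t.sum, β⟫ < 0 := by nlinarith
    rw [inner_multiset_sum] at h4
    have h5 : 0 < (t.map fun x => -⟪x, β⟫).sum := by
      rw [Multiset.sum_map_neg]; linarith
    obtain ⟨γ, hγt, hγ⟩ := exists_pos_of_sum _ h5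
    obtain ⟨u, rfl⟩ := Multiset.exists_cons_of_mem hγt
    have hγR := hs γ (Multiset.mem_cons_of_mem hγt)
    have hu : ∀ δ ∈ u, δ ∈ D.R := fun δ hδ =>
      hs δ (Multiset.mem_cons_of_mem (Multiset.mem_cons_of_mem hδ))
    simp only [Multiset.card_cons] at hk
    by_cases h6 : γ + β = 0
    · have h7 : (β ::ₘ γ ::ₘ u).sum = u.sum := by
        rw [Multiset.sum_cons, Multiset.sum_cons, ← add_assoc, add_comm β, h6, zero_add]
      rw [h7] at hpr hne
      exact hne (ih _ (by omega) u rfl hu hpr)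
    · have h7 : (β ::ₘ γ ::ₘ u).sum = ((γ + β) ::ₘ u).sum := by
        rw [Multiset.sum_cons, Multiset.sum_cons, Multiset.sum_cons, ← add_assoc, add_comm β]
      rw [h7] at hpr hne
      refine hne (ih (u.card + 1) (by omega) ((γ + β) ::ₘ u) (by simp) ?_ hpr)
      intro δ hδ
      rcases Multiset.mem_cons.1 hδ with rfl | hδ
      · exact D.add_root hγR hβR (by linarith) h6
      · exact hu δ hδ

lemma exists_multiset {x : Vn n} (hx : x ∈ D.Q) :
    ∃ s : Multiset (Vn n), (∀ β ∈ s, β ∈ D.R) ∧ s.sum = x := by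
  have hx' : x ∈ AddSubgroup.closure (D.R : Set (Vn n)) := by
    rw [← Submodule.span_int_eq_addSubgroupClosure]; exact hx
  induction hx' using AddSubgroup.closure_induction with
  | mem y hy => exact ⟨{y}, by simpa using hy, by simp⟩
  | zero => exact ⟨0, by simp, by simp⟩
  | add y z hy' hz' hy hz =>
    have e := Submodule.span_int_eq_addSubgroupClosure (D.R : Set (Vn n))
    obtain ⟨s, hs, rfl⟩ := hy (by rw [← e] at hy'; exact hy')
    obtain ⟨t, ht, rfl⟩ := hz (by rw [← e] at hz'; exact hz')
    refine ⟨s + t, ?_, by simp⟩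
    intro β hβ
    rcases Multiset.mem_add.1 hβ with h | h
    · exact hs _ h
    · exact ht _ h
  | neg y hy' hy =>
    obtain ⟨s, hs, rfl⟩ := hy (by rwa [Submodule.neg_mem_iff] at hx)
    refine ⟨s.map Neg.neg, ?_, by rw [Multiset.sum_map_neg']⟩
    intro β hβ
    obtain ⟨γ, hγ, rfl⟩ := Multiset.mem_map.1 hβ
    exact D.neg_mem (hs _ hγ)

lemma Q_minuscule_zero {x : Vn n} (hx : x ∈ D.Q) (h : ∀ β ∈ D.R, pr x β ≤ 1) : x = 0 := by
  obtain ⟨s, hs, rfl⟩ := D.exists_multiset hx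
  exact D.sum_roots_zero _ s rfl hs h

/-! ### the antiinvariant function -/

lemma reflVec_neg_left (β x : Vn n) : reflVec (-β) x = reflVec β x := by
  simp [reflVec_eq, pr_neg_right]

lemma refl_eq_neg {β α : Vn n} (hβ : β ∈ D.Rplus) (hα : α ∈ D.Rplus) (h : reflVec β α = -α) :
    α = β := by
  have h1 : α = (pr α β / 2) • β := by
    rw [reflVec_eq] at h
    have h2 : pr α β • β = (2 : ℝ) • α := by
      rw [two_smul, ← sub_eq_zero]
      have := sub_eq_zero.2 h
      rw [← neg_eq_zero, ← this]; abel
    rw [div_eq_inv_mul, mul_smul, h2, smul_smul]; norm_num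
  have h2 := D.reduced β (D.pos_sub hβ) (pr α β / 2) (h1 ▸ D.pos_sub hα)
  rcases h2 with h2 | h2
  · rw [h2, one_smul] at h1; exact h1
  · rw [h2, neg_one_smul] at h1
    exact absurd (h1 ▸ hα) (D.pos_not_and β hβ)

open Classical in
lemma prod_sign {β : Vn n} (hβ : β ∈ D.Rplus) :
    ∏ α ∈ D.Rplus, (if reflVec β α ∈ D.Rplus then (1:ℝ) else -1) = -1 := by
  have hβR := D.pos_sub hβ
  have h0 := D.pos_ne hβ
  rw [← Finset.mul_prod_erase _ _ hβ, reflVec_self h0, if_neg (D.pos_not_and β hβ)]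
  rw [Finset.prod_involution (fun α _ => D.tau β α), mul_one]
  · intro α hα
    have hα := Finset.mem_of_mem_erase hα
    by_cases h : reflVec β α ∈ D.Rplus
    · simp [tau, h, reflVec_reflVec h0, hα]
    · simp [tau, h, reflVec_reflVec h0, reflVec_neg, D.pos_not_and α hα]
  · intro α hα h1 h2
    have h3 : reflVec β α ∉ D.Rplus := fun h => h1 (if_pos h)
    simp only [tau, if_neg h3] at h2
    exact Finset.ne_of_mem_erase hα
      (D.refl_eq_neg hβ (Finset.mem_of_mem_erase hα) (neg_eq_iff_eq_neg.1 h2))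
  · intro α hα
    rw [Finset.mem_erase] at hα ⊢
    refine ⟨fun h => ?_, D.tau_mem hβR hα.2⟩
    have h4 := D.tau_tau hβR hα.2
    rw [h] at h4
    simp only [tau, reflVec_self h0, if_neg (D.pos_not_and β hβ), neg_neg] at h4
    exact hα.1 h4.symm
  · intro α hα
    exact D.tau_tau hβR (Finset.mem_of_mem_erase hα)

/-- The product of sines (Weyl denominator). -/
def g (N : ℤ) (x : Vn n) : ℝ := ∏ α ∈ D.Rplus, Real.sin (Real.pi * pr x α / N)

lemma g_refl_pos (N : ℤ) {β : Vn n} (hβ : β ∈ D.Rplus) (x : Vn n) :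
    D.g N (reflVec β x) = - D.g N x := by
  classical
  have h0 := D.pos_ne hβ
  have h1 : ∀ α ∈ D.Rplus, Real.sin (Real.pi * pr (reflVec β x) α / N) =
      (if reflVec β α ∈ D.Rplus then (1:ℝ) else -1) *
        Real.sin (Real.pi * pr x (D.tau β α) / N) := by
    intro α _
    rw [pr_reflVec_left h0]
    by_cases h : reflVec β α ∈ D.Rplus
    · simp [tau, h]
    · simp [tau, h, pr_neg_right, neg_div, Real.sin_neg]
  unfold g
  rw [Finset.prod_congr rfl h1, Finset.prod_mul_distrib, D.prod_sign hβ,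
    D.prod_tau (D.pos_sub hβ) (fun α => Real.sin (Real.pi * pr x α / N)), neg_one_mul]

lemma g_refl (N : ℤ) {β : Vn n} (hβ : β ∈ D.R) (x : Vn n) :
    D.g N (reflVec β x) = - D.g N x := by
  rcases D.pos_or β hβ with h | h
  · exact D.g_refl_pos N h x
  · rw [← reflVec_neg_left]; exact D.g_refl_pos N h x

lemma prod_cos {β : Vn n} (hβ : β ∈ D.R) :
    ∏ α ∈ D.Rplus, Real.cos (Real.pi * pr β α) = 1 := by
  have h0 := D.root_ne_zero _ hβ
  have hsq : ∀ α ∈ D.Rplus, Real.cos (Real.pi * pr β α) * Real.cos (Real.pi * pr β α) = 1 := by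
    intro α hα
    obtain ⟨z, hz⟩ := D.pr_int (D.pos_sub hα) hβ
    rw [hz, mul_comm Real.pi, Real.cos_int_mul_pi, ← mul_zpow]; simp
  have hpr : ∀ α, pr β (reflVec β α) = - pr β α := by
    intro α
    rw [← pr_reflVec_left h0, reflVec_self h0, pr_neg_left]
  have htau : ∀ α, Real.cos (Real.pi * pr β (D.tau β α)) = Real.cos (Real.pi * pr β α) := by
    intro α
    rcases D.tau_cases β α with h | h
    · rw [h, hpr, mul_neg, Real.cos_neg]
    · rw [h, pr_neg_right, hpr, neg_neg]
  refine Finset.prod_involution (fun α _ => D.tau β α) ?_ ?_ ?_ ?_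
  · intro α hα
    rw [htau]; exact hsq α hα
  · intro α hα h1 h2
    apply h1
    rcases D.tau_cases β α with h | h
    · have := hpr α
      rw [← h, h2] at this
      have : pr β α = 0 := by linarith
      rw [this]; simp
    · rw [h] at h2
      have h3 : reflVec β α = -α := neg_eq_iff_eq_neg.1 h2
      rcases D.pos_or β hβ with hp | hp
      · have := D.refl_eq_neg hp hα h3
        rw [this, pr_self h0, mul_comm, Real.cos_two_pi]
      · rw [← reflVec_neg_left] at h3
        have := D.refl_eq_neg hp hα h3
        rw [this, pr_neg_right, pr_self h0, mul_neg, Real.cos_neg, mul_comm, Real.cos_two_pi]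
  · intro α hα; exact D.tau_mem hβ hα
  · intro α hα; exact D.tau_tau hβ hα

lemma g_add_root (N : ℤ) (hN : N ≠ 0) {β : Vn n} (hβ : β ∈ D.R) (x : Vn n) :
    D.g N (x + (N : ℝ) • β) = D.g N x := by
  have hN' : (N : ℝ) ≠ 0 := by exact_mod_cast hN
  have h1 : ∀ α ∈ D.Rplus, Real.sin (Real.pi * pr (x + (N : ℝ) • β) α / N) =
      Real.cos (Real.pi * pr β α) * Real.sin (Real.pi * pr x α / N) := by
    intro α hα
    obtain ⟨z, hz⟩ := D.pr_int (D.pos_sub hα) hβ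
    have e : Real.pi * pr (x + (N : ℝ) • β) α / N = Real.pi * pr x α / N + z * Real.pi := by
      rw [pr_add_left, pr_smul_left, hz]; field_simp
    rw [e, hz, Real.sin_add, Real.sin_int_mul_pi, mul_comm Real.pi (z : ℝ)]; ring
  unfold g
  rw [Finset.prod_congr rfl h1, Finset.prod_mul_distrib, D.prod_cos hβ, one_mul]

lemma g_add_Q (N : ℤ) (hN : N ≠ 0) {q : Vn n} (hq : q ∈ D.Q) : ∀ x : Vn n,
    D.g N (x + (N : ℝ) • q) = D.g N x := by
  obtain ⟨s, hs, rfl⟩ := D.exists_multiset hq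
  clear hq
  induction s using Multiset.induction_on with
  | empty => intro x; simp
  | cons a s ih =>
    intro x
    rw [Multiset.sum_cons, smul_add, ← add_assoc,
      ih (fun β hβ => hs β (Multiset.mem_cons_of_mem hβ)),
      D.g_add_root N hN (hs a (Multiset.mem_cons_self a s))]

end RootSystemData

namespace RootSystemData
variable {n : ℕ} (D : RootSystemData n)

lemma fw_li : LinearIndependent ℝ D.fw := by
  rw [Fintype.linearIndependent_iff]
  intro c hc j
  have h1 : pr (∑ i, c i • D.fw i) (D.sroot j) = c j := by
    simp [pr_sum_left, pr_smul_left, pr_fw]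
  rw [hc, pr_zero_left] at h1
  exact h1.symm

lemma fw_span : ⊤ ≤ Submodule.span ℝ (Set.range D.fw) := by
  intro x _
  have h1 : x = ∑ i, pr x (D.sroot i) • D.fw i := by
    rw [← sub_eq_zero]
    apply D.eq_zero_of_pr
    intro j
    simp [pr_sub_left, pr_sum_left, pr_smul_left, pr_fw]
  rw [h1]
  exact Submodule.sum_mem _ fun i _ => Submodule.smul_mem _ _ (Submodule.subset_span ⟨i, rfl⟩)

lemma finite_ball (r : ℝ) : Set.Finite (Metric.closedBall D.rho r ∩ (D.P : Set (Vn n))) := by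
  have := ZSpan.setFinite_inter (Module.Basis.mk D.fw_li D.fw_span)
    (s := Metric.closedBall D.rho r) Metric.isBounded_closedBall
  rw [Module.Basis.coe_mk] at this
  exact this

lemma finite_Qmod (N : ℤ) (hN : N ≠ 0) : Finite (Qmod D N) := by
  have : Module.Finite ℤ D.P := by
    rw [Module.Finite.iff_fg]
    exact Submodule.fg_span (Set.finite_range _)
  apply Module.finite_of_fg_torsion
  intro x
  refine ⟨⟨N, mem_nonZeroDivisors_of_ne_zero hN⟩, ?_⟩
  induction x using Submodule.Quotient.induction_on with
  | _ x =>
    change N • (Submodule.Quotient.mk x : Qmod D N) = 0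
    rw [← Submodule.Quotient.mk_smul, Submodule.Quotient.mk_eq_zero]
    exact ⟨x, rfl⟩

lemma mk_eq_iff (N : ℤ) (x y : D.P) :
    (Submodule.Quotient.mk x : Qmod D N) = Submodule.Quotient.mk y ↔
      ∃ p ∈ D.P, (x : Vn n) = y + (N : ℝ) • p := by
  rw [Submodule.Quotient.eq]
  constructor
  · rintro ⟨p, hp⟩
    refine ⟨p, p.2, ?_⟩
    have h1 := congrArg (Subtype.val) hp
    have h2 : N • (p : Vn n) = x - y := h1
    rw [Int.cast_smul_eq_zsmul, h2]; abel
  · rintro ⟨p, hp, h⟩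
    refine ⟨⟨p, hp⟩, ?_⟩
    apply Subtype.ext
    change N • p = (x : Vn n) - y
    rw [h, Int.cast_smul_eq_zsmul]; abel

/-- The sign function on `P`. -/
def F (N : ℤ) (x : Vn n) : ℝ := D.g N (x + (N : ℝ) • (D.rho - x))

lemma N_eq {N : ℤ} (hN : (N : ℝ) = 1 + D.h) : (N : ℝ) = 2 + pr D.rho D.hst := by rw [hN, h_eq]; ring

lemma N_pos {N : ℤ} (hN : (N : ℝ) = 1 + D.h) : (0 : ℝ) < N := by
  have := D.pr_rho_pos D.theta_mem
  rw [D.N_eq hN]; linarith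

lemma N_ne {N : ℤ} (hN : (N : ℝ) = 1 + D.h) : N ≠ 0 := by
  have := D.N_pos hN
  intro h; rw [h] at this; simp at this

lemma sub_smul_mem {N : ℤ} (hN : (N : ℝ) = 1 + D.h) {x : Vn n} (hx : x ∈ D.P) : x - (N : ℝ) • x ∈ D.Q := by
  have := Submodule.neg_mem _ (D.h_smul_mem hx)
  rw [hN, add_smul, one_smul]
  convert this using 1
  abel

lemma F_shift {N : ℤ} (hN : (N : ℝ) = 1 + D.h) (x : Vn n) {p : Vn n} (hp : p ∈ D.P) : D.F N (x + (N : ℝ) • p) = D.F N x := by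
  unfold F
  rw [← D.g_add_Q N (D.N_ne hN) (D.sub_smul_mem hN hp) (x + (N : ℝ) • (D.rho - x))]
  congr 1
  simp only [smul_sub, smul_add]
  abel

lemma g_rho {N : ℤ} (hN : (N : ℝ) = 1 + D.h) : D.g N D.rho ≠ 0 := by
  refine Finset.prod_ne_zero_iff.2 fun α hα => ?_
  have h1 := D.pr_rho_pos hα
  have h2 := D.pr_le_theta D.rho_dom (D.pos_sub hα)
  have h3 := D.N_eq hN
  have h4 := D.N_pos hN
  refine (Real.sin_pos_of_pos_of_lt_pi (by positivity) ?_).ne'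
  rw [div_lt_iff₀ h4]
  have := Real.pi_pos
  gcongr
  linarith

lemma weyl_prop (N : ℤ) {w : Vn n ≃ₗ[ℝ] Vn n} (hw : w ∈ D.Weyl) :
    (∀ x, D.g N (w x) = LinearMap.det (w : Vn n →ₗ[ℝ] Vn n) * D.g N x) ∧
    (∀ x ∈ D.P, w x - x ∈ D.Q ∧ w⁻¹ x - x ∈ D.Q) := by
  unfold Weyl at hw
  induction hw using Subgroup.closure_induction with
  | mem w hw =>
    obtain ⟨α, hα, hw⟩ := hw
    have h0 := D.root_ne_zero _ hα
    have he : w = reflEquiv α := by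
      ext1 v; rw [hw, reflEquiv_apply]
    have hinv : w⁻¹ = w := by
      rw [inv_eq_iff_mul_eq_one]
      ext1 v
      change w (w v) = v
      rw [hw, hw, reflVec_reflVec h0]
    refine ⟨fun x => ?_, fun x hx => ?_⟩
    · rw [hw, D.g_refl N hα, he, reflEquiv_det h0, neg_one_mul]
    · rw [hinv, hw]
      exact ⟨D.refl_sub_mem_Q hx hα, D.refl_sub_mem_Q hx hα⟩
  | one =>
    refine ⟨fun x => ?_, fun x _ => ?_⟩
    · have : ((1 : Vn n ≃ₗ[ℝ] Vn n) : Vn n →ₗ[ℝ] Vn n) = LinearMap.id := rfl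
      rw [this, LinearMap.det_id, one_mul]; rfl
    · rw [inv_one]
      have : (1 : Vn n ≃ₗ[ℝ] Vn n) x = x := rfl
      rw [this, sub_self]; simp
  | mul a b _ _ ha hb =>
    refine ⟨fun x => ?_, fun x hx => ⟨?_, ?_⟩⟩
    · have : ((a * b : Vn n ≃ₗ[ℝ] Vn n) : Vn n →ₗ[ℝ] Vn n) =
        (a : Vn n →ₗ[ℝ] Vn n) ∘ₗ (b : Vn n →ₗ[ℝ] Vn n) := rfl
      rw [this, LinearMap.det_comp]
      change D.g N (a (b x)) = _
      rw [ha.1, hb.1, mul_assoc]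
    · have h1 := (hb.2 x hx).1
      have hbx : b x ∈ D.P := by
        have := add_mem (D.Q_le_P h1) hx
        rwa [sub_add_cancel] at this
      have h2 := add_mem (ha.2 _ hbx).1 h1
      rwa [sub_add_sub_cancel] at h2
    · have h1 := (ha.2 x hx).2
      have hbx : a⁻¹ x ∈ D.P := by
        have := add_mem (D.Q_le_P h1) hx
        rwa [sub_add_cancel] at this
      have h2 := add_mem (hb.2 _ hbx).2 h1
      rw [sub_add_sub_cancel] at h2
      rwa [mul_inv_rev]
  | inv a _ ha =>
    refine ⟨fun x => ?_, fun x hx => ?_⟩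
    · have h1 : a (a⁻¹ x) = x := a.apply_symm_apply x
      have h2 := ha.1 (a⁻¹ x)
      rw [h1] at h2
      have h3 : ((a⁻¹ : Vn n ≃ₗ[ℝ] Vn n) : Vn n →ₗ[ℝ] Vn n) ∘ₗ (a : Vn n →ₗ[ℝ] Vn n) =
          LinearMap.id := by
        ext1 v; exact a.symm_apply_apply v
      have h4 := congrArg LinearMap.det h3
      rw [LinearMap.det_comp, LinearMap.det_id] at h4
      rw [h2, ← mul_assoc, h4, one_mul]
    · rw [inv_inv]; exact (ha.2 x hx).symm

lemma F_weyl {N : ℤ} (hN : (N : ℝ) = 1 + D.h) {w : Vn n ≃ₗ[ℝ] Vn n} (hw : w ∈ D.Weyl)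
    (x : Vn n) : D.F N (w x) = LinearMap.det (w : Vn n →ₗ[ℝ] Vn n) * D.F N x := by
  obtain ⟨h1, h2⟩ := D.weyl_prop N hw
  unfold F
  rw [← h1, ← D.g_add_Q N (D.N_ne hN) (h2 _ D.rho_mem).1 (w x + _)]
  congr 1
  simp only [map_add, map_smul, map_sub, smul_sub]
  abel

lemma reflEquiv_mem {α : Vn n} (hα : α ∈ D.R) : reflEquiv α ∈ D.Weyl :=
  Subgroup.subset_closure ⟨α, hα, reflEquiv_apply α⟩

/-- The reflection on the weight lattice. -/
def reflP {α : Vn n} (hα : α ∈ D.R) : D.P →ₗ[ℤ] D.P :=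
  ((reflEquiv α : Vn n →ₗ[ℝ] Vn n).restrictScalars ℤ).restrict
    (fun x hx => by
      change reflEquiv α x ∈ D.P
      rw [reflEquiv_apply]; exact D.refl_mem_P hx hα)

lemma sign_refl {N : ℤ} {f : Qmod D N →₀ ℂ} (hf : IsSignVector D N f) {α : Vn n} (hα : α ∈ D.R)
    (x y : D.P) {p : Vn n} (hp : p ∈ D.P) (h : (y : Vn n) = reflVec α x + (N : ℝ) • p) :
    f (Submodule.Quotient.mk y) = - f (Submodule.Quotient.mk x) := by
  have h1 := hf _ (D.reflEquiv_mem hα) (D.reflP hα) (fun _ => rfl) x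
  rw [reflEquiv_det (D.root_ne_zero _ hα)] at h1
  have h2 : (Submodule.Quotient.mk y : Qmod D N) = Submodule.Quotient.mk (D.reflP hα x) := by
    rw [mk_eq_iff]
    refine ⟨p, hp, ?_⟩
    rw [h, ← reflEquiv_apply]; rfl
  rw [h2, h1]; simp

lemma sign_unique {N : ℤ} (hN : (N : ℝ) = 1 + D.h) {f : Qmod D N →₀ ℂ}
    (hf : IsSignVector D N f)
    (h0 : f (Submodule.Quotient.mk ⟨D.rho, D.rho_mem⟩) = 0) : f = 0 := by
  by_contra hne
  obtain ⟨q, hq⟩ := Finsupp.ne_iff.1 hne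
  obtain ⟨x, rfl⟩ := Submodule.Quotient.mk_surjective _ q
  rw [Finsupp.zero_apply] at hq
  let S : Set (Vn n) := {y | ∃ hy : y ∈ D.P, y - D.rho ∈ D.Q ∧
    f (Submodule.Quotient.mk ⟨y, hy⟩) ≠ 0}
  have hS : S.Nonempty := by
    have hm : D.rho - (x : Vn n) ∈ D.P := sub_mem D.rho_mem x.2
    refine ⟨(x : Vn n) + (N : ℝ) • (D.rho - x), add_mem x.2 (int_smul_mem _ hm N), ?_, ?_⟩
    · have := Submodule.neg_mem _ (D.sub_smul_mem hN hm)
      convert this using 1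
      abel
    · convert hq using 2
      rw [mk_eq_iff]
      exact ⟨_, hm, rfl⟩
  -- a minimal element
  have hmin : ∃ y ∈ S, ∀ z ∈ S, ‖y - D.rho‖ ≤ ‖z - D.rho‖ := by
    obtain ⟨y₀, hy₀⟩ := hS
    have hfin : Set.Finite (Metric.closedBall D.rho ‖y₀ - D.rho‖ ∩ S) :=
      (D.finite_ball ‖y₀ - D.rho‖).subset fun z hz => ⟨hz.1, hz.2.1⟩
    obtain ⟨y, hy, hy2⟩ := Set.exists_min_image _ (fun z => ‖z - D.rho‖) hfin
      ⟨y₀, by simp [dist_eq_norm], hy₀⟩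
    refine ⟨y, hy.2, fun z hz => ?_⟩
    by_cases hz2 : ‖z - D.rho‖ ≤ ‖y₀ - D.rho‖
    · exact hy2 z ⟨by simpa [dist_eq_norm] using hz2, hz⟩
    · have := hy2 y₀ ⟨by simp [dist_eq_norm], hy₀⟩
      linarith
  obtain ⟨y, ⟨hyP, hyQ, hyf⟩, hymin⟩ := hmin
  have key : ∀ α ∈ D.Rplus, ∀ k : ℤ, pr y α ≠ k * N ∧
      0 ≤ (pr y α - k * N) * (pr D.rho α - k * N) := by
    intro α hα k
    have hαR := D.pos_sub hα
    have hα0 := D.pos_ne hα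
    have pα := inner_pos_of_ne hα0
    obtain ⟨m, hm⟩ := D.pr_P_int hyP hαR
    have hP : y - ((m : ℝ) - k * N) • α ∈ D.P := by
      have := int_smul_mem _ (D.root_mem_P hαR) (m - k * N)
      push_cast at this
      exact sub_mem hyP this
    have hf1 : f (Submodule.Quotient.mk ⟨_, hP⟩) = - f (Submodule.Quotient.mk ⟨y, hyP⟩) := by
      refine D.sign_refl hf hαR ⟨y, hyP⟩ ⟨_, hP⟩
        (int_smul_mem _ (D.root_mem_P hαR) k) ?_
      simp only
      rw [reflVec_eq, hm, smul_smul, mul_comm (N : ℝ), sub_smul]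
      abel
    constructor
    · intro he
      have h1 : (⟨y - ((m : ℝ) - k * N) • α, hP⟩ : D.P) = ⟨y, hyP⟩ := by
        apply Subtype.ext
        simp only
        rw [← hm, he, sub_self, zero_smul, sub_zero]
      rw [h1] at hf1
      apply hyf
      linear_combination hf1 / 2
    · have hS2 : y - ((m : ℝ) - k * N) • α ∈ S := by
        refine ⟨hP, ?_, ?_⟩
        · have := int_smul_mem _ (D.root_mem_Q hαR) (m - k * N)
          push_cast at this
          have h2 := sub_mem hyQ this
          convert h2 using 1
          abel
        · rw [hf1]; exact neg_ne_zero.2 hyf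
      have h1 := hymin _ hS2
      have h2 : ‖y - D.rho‖ ^ 2 ≤ ‖y - ((m : ℝ) - k * N) • α - D.rho‖ ^ 2 := by gcongr
      have e : y - ((m : ℝ) - k * N) • α - D.rho = (y - D.rho) - ((m : ℝ) - k * N) • α := by abel
      rw [e, norm_sub_sq_real (y - D.rho), real_inner_smul_right, norm_smul, mul_pow,
        ← real_inner_self_eq_norm_sq α, Real.norm_eq_abs, sq_abs, inner_sub_left] at h2
      have h3 := pr_mul hα0 y
      have h4 := pr_mul hα0 D.rho
      rw [hm] at h3 ⊢
      have h5 : 0 ≤ (((m : ℝ) - k * N) * (pr D.rho α - k * N)) * ⟪α, α⟫ := by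
        linear_combination h2 + ((m : ℝ) - k * N) * (h3 - h4)
      exact nonneg_of_mul_nonneg_left h5 pα
  have hpos : ∀ α ∈ D.Rplus, 0 < pr y α := by
    intro α hα
    obtain ⟨h1, h2⟩ := key α hα 0
    simp only [Int.cast_zero, zero_mul, sub_zero] at h1 h2
    exact lt_of_le_of_ne (nonneg_of_mul_nonneg_left h2 (D.pr_rho_pos hα)) (Ne.symm h1)
  have hlt : pr y D.hst < N := by
    obtain ⟨h1, h2⟩ := key _ D.theta_mem 1
    simp only [Int.cast_one, one_mul] at h1 h2
    have h3 := D.N_eq hN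
    refine lt_of_le_of_ne ?_ h1
    have h4 : pr D.rho D.hst - N = -2 := by linarith
    rw [h4] at h2
    linarith
  have hdom : ∀ i, 0 ≤ pr (y - D.rho) (D.sroot i) := by
    intro i
    have h1 := hpos _ (D.sroot_mem i)
    obtain ⟨z, hz⟩ := D.pr_P_int hyP (D.sroot_R i)
    rw [pr_sub_left, pr_rho]
    rw [hz] at h1 ⊢
    have h2 : (1 : ℤ) ≤ z := by
      have : (0 : ℤ) < z := by exact_mod_cast h1
      omega
    have : (1 : ℝ) ≤ z := by exact_mod_cast h2
    linarith
  have hle : pr (y - D.rho) D.hst ≤ 1 := by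
    obtain ⟨z, hz⟩ := D.pr_P_int hyP D.theta_R
    have h3 := D.N_eq hN
    rw [pr_sub_left]
    rw [hz] at hlt ⊢
    have h2 : z ≤ N - 1 := by
      have : z < N := by exact_mod_cast hlt
      omega
    have : (z : ℝ) ≤ N - 1 := by exact_mod_cast h2
    linarith
  have hzero := D.Q_minuscule_zero hyQ fun β hβ => (D.pr_le_theta hdom hβ).trans hle
  have : y = D.rho := sub_eq_zero.1 hzero
  subst this
  exact hyf h0

end RootSystemData

/-- set `N = 1 + h`.  The sign character of `W` occurs with multiplicity
exactly one in the permutation representation `ℂ[P/NP]`: the subspace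
`{v ∈ ℂ[P/NP] : w·v = sgn(w)·v for all w ∈ W}` is one-dimensional. -/
theorem stmt_9 {n : ℕ} (D : RootSystemData n) (N : ℤ) (hN : (N : ℝ) = 1 + D.h) :
    ∃ f₀ : Qmod D N →₀ ℂ, IsSignVector D N f₀ ∧ f₀ ≠ 0 ∧
      ∀ f : Qmod D N →₀ ℂ, IsSignVector D N f → ∃ c : ℂ, f = c • f₀ := by
  classical
  have hfin : Finite (Qmod D N) := D.finite_Qmod N (D.N_ne hN)
  let f₀ : Qmod D N →₀ ℂ := Finsupp.equivFunOnFinite.symm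
    fun q => ((D.F N ((Submodule.Quotient.mk_surjective _ q).choose : Vn n) : ℝ) : ℂ)
  have hf₀ : ∀ x : D.P, f₀ (Submodule.Quotient.mk x) = ((D.F N (x : Vn n) : ℝ) : ℂ) := by
    intro x
    have h1 := (Submodule.Quotient.mk_surjective (NPsub D N) (Submodule.Quotient.mk x)).choose_spec
    obtain ⟨p, hp, h2⟩ := (D.mk_eq_iff N _ _).1 h1
    change ((D.F N _ : ℝ) : ℂ) = _
    rw [h2, D.F_shift hN _ hp]
  have hsign : IsSignVector D N f₀ := by
    intro w hw wP hwP x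
    rw [hf₀, hf₀, hwP, D.F_weyl hN hw]
    push_cast
    rfl
  have hrho : f₀ (Submodule.Quotient.mk ⟨D.rho, D.rho_mem⟩) ≠ 0 := by
    rw [hf₀]
    have := D.g_rho hN
    simp only [RootSystemData.F, sub_self, smul_zero, add_zero]
    exact_mod_cast this
  refine ⟨f₀, hsign, fun h => hrho (by rw [h]; rfl), fun f hf => ?_⟩
  refine ⟨f (Submodule.Quotient.mk ⟨D.rho, D.rho_mem⟩) /
    f₀ (Submodule.Quotient.mk ⟨D.rho, D.rho_mem⟩), ?_⟩
  rw [← sub_eq_zero]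
  apply D.sign_unique hN
  · intro w hw wP hwP x
    simp only [Finsupp.sub_apply, Finsupp.smul_apply, smul_eq_mul, hf w hw wP hwP x,
      hsign w hw wP hwP x]
    ring
  · simp only [Finsupp.sub_apply, Finsupp.smul_apply, smul_eq_mul]
    rw [div_mul_cancel₀ _ hrho, sub_self]
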